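/- arXiv:2309.01990 — 2 statements merged into one kernel-verified Lean document; each statement's English description precedes it below -/
import Mathlib

section
/- Let u_f > 0, w > 0, ρ_j > 0, ρ_c = w · ρ_j / (u_f + w), and 2·ρ_c ≤ ρ_T ≤ ρ_j + ρ_c. Define g(ρ1) = min(u_f · ρ1, w · (ρ_j − ρ1)) + min(u_f · (ρ_T − ρ1), w · (ρ_j − ρ_T + ρ1)). Then for ρ1 with max(0, ρ_T − ρ_j) ≤ ρ1 ≤ min(ρ_T, ρ_j), equality g(ρ1) = w · (2·ρ_j − ρ_T) holds if and only if ρ_c ≤ ρ1 ≤ ρ_T − ρ_c. In particular the maximum is achieved at ρ1 = ρ_c (HOT lanes exactly at critical density), at ρ1 = ρ_T − ρ_c (general-purpose lanes exactly at critical density), and at all intermediate points where both lane groups are congested. -/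
/-- Lemma IV.1 / Corollary IV.2 (maximizer characterization): with
2ρc ≤ ρT ≤ ρj + ρc, the outflow g(ρ1) attains the maximum w·(2ρj − ρT) exactly
when ρc ≤ ρ1 ≤ ρT − ρc. -/
theorem max_outflow_maximizer_characterization
    (u_f w ρ_j ρ_T : ℝ) (huf : 0 < u_f) (hw : 0 < w) (hρj : 0 < ρ_j)
    (hlow : 2 * (w * ρ_j / (u_f + w)) ≤ ρ_T)
    (hhigh : ρ_T ≤ ρ_j + w * ρ_j / (u_f + w))
    (g : ℝ → ℝ)
    (hg : ∀ ρ1, g ρ1 = min (u_f * ρ1) (w * (ρ_j - ρ1)) +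
      min (u_f * (ρ_T - ρ1)) (w * (ρ_j - ρ_T + ρ1))) :
    ∀ ρ1, max 0 (ρ_T - ρ_j) ≤ ρ1 → ρ1 ≤ min ρ_T ρ_j →
      (g ρ1 = w * (2 * ρ_j - ρ_T) ↔
        w * ρ_j / (u_f + w) ≤ ρ1 ∧ ρ1 ≤ ρ_T - w * ρ_j / (u_f + w)) := by
  intro ρ1 _ _
  have hs : 0 < u_f + w := by linarith
  have e1 : w * ρ_j / (u_f + w) ≤ ρ1 ↔ w * (ρ_j - ρ1) ≤ u_f * ρ1 := by
    rw [div_le_iff₀ hs]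
    constructor <;> intro h <;> linarith
  have e2 : ρ1 ≤ ρ_T - w * ρ_j / (u_f + w) ↔
      w * (ρ_j - ρ_T + ρ1) ≤ u_f * (ρ_T - ρ1) := by
    rw [le_sub_comm, div_le_iff₀ hs]
    constructor <;> intro h <;> linarith
  rw [e1, e2, hg]
  constructor
  · intro h
    have a1 := min_le_left (u_f * ρ1) (w * (ρ_j - ρ1))
    have a2 := min_le_right (u_f * ρ1) (w * (ρ_j - ρ1))
    have b1 := min_le_left (u_f * (ρ_T - ρ1)) (w * (ρ_j - ρ_T + ρ1))
    have b2 := min_le_right (u_f * (ρ_T - ρ1)) (w * (ρ_j - ρ_T + ρ1))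
    constructor <;> linarith
  · rintro ⟨h1, h2⟩
    rw [min_eq_right h1, min_eq_right h2]
    ring
end

section
/- Let H > 0, L1 > 0, K1 > 0, and J, K2 ∈ ℝ with K2 · L1 > J. Consider the linearized closed-loop matrix M = [[ (J − K2·L1)/(L1·H), K1/H ], [ −1/L1, 0 ]]. Then every complex eigenvalue μ of M (i.e., every complex root of μ² − ((J − K2·L1)/(L1·H))·μ + K1/(L1·H) = 0) satisfies Re(μ) < 0; hence the linearized system [ξ′; λ′] = M·[ξ; λ] is asymptotically stable. In particular, when J ≤ 0 (strictly under-critical phase) this holds for all K1, K2 > 0, and when J > 0 (strictly over-critical phase) it holds whenever K2 > J/L1. -/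
/-- Lemma V.3: the linearized closed-loop matrix
M = [[(J − K2·L1)/(L1·H), K1/H], [−1/L1, 0]] is Hurwitz whenever H, L1, K1 > 0
and K2·L1 > J: every complex root of the characteristic polynomial
μ² − ((J − K2·L1)/(L1·H))·μ + K1/(L1·H) = 0 has negative real part. -/
theorem linearized_closed_loop_stable
    (H L1 K1 J K2 : ℝ) (hH : 0 < H) (hL1 : 0 < L1) (hK1 : 0 < K1)
    (hK2 : J < K2 * L1) :
    ∀ μ : ℂ, μ ^ 2 - (((J - K2 * L1) / (L1 * H) : ℝ) : ℂ) * μ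
        + ((K1 / (L1 * H) : ℝ) : ℂ) = 0 → μ.re < 0 := by
  intro μ h
  have ha : (J - K2 * L1) / (L1 * H) < 0 :=
    div_neg_of_neg_of_pos (by linarith) (by positivity)
  have hb : 0 < K1 / (L1 * H) := by positivity
  generalize (J - K2 * L1) / (L1 * H) = a at *
  generalize K1 / (L1 * H) = b at *
  have hre := congrArg Complex.re h
  have him := congrArg Complex.im h
  simp [pow_two] at hre him
  by_contra hx
  have hx' : 0 ≤ μ.re := not_lt.mp hx
  have hy : μ.im * (2 * μ.re - a) = 0 := by linarith
  rcases mul_eq_zero.mp hy with h0 | h0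
  · rw [h0] at hre
    nlinarith [mul_nonneg hx' (neg_nonneg.mpr ha.le), mul_nonneg hx' hx']
  · linarith
end
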